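/- Let X be a finite set of distinct points in P^m × P^n with X = X_1 × X_2. Then X is ACM, I_X = I_{X_1}S + I_{X_2}S, and HF_X(i,j) = HF_{X_1}(i) · HF_{X_2}(j) for all (i,j) ∈ Z^2. -/

import Mathlib

/- Common setup: finite sets of points in the multiprojective space
   `P^m x P^n` over a field `K` of characteristic zero, their bihomogeneous
   vanishing ideals, bigraded Hilbert functions, Kähler differents,
   separators, Cayley-Bacharach property and complete intersections. -/

open MvPolynomial

set_option maxHeartbeats 1000000
set_option synthInstance.maxHeartbeats 400000

noncomputable section

namespace MultiProjPoints

variable (K : Type) [Field K] [CharZero K] [DecidableEq K]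

/-- The bigraded coordinate ring `S = K[X_0,…,X_m,Y_0,…,Y_n]` of `P^m × P^n`. -/
abbrev BiRing (m n : ℕ) : Type := MvPolynomial (Fin (m+1) ⊕ Fin (n+1)) K

/-- The weights giving the bigrading: `deg X_i = (1,0)`, `deg Y_j = (0,1)`. -/
def biwt (m n : ℕ) : (Fin (m+1) ⊕ Fin (n+1)) → ℤ × ℤ :=
  Sum.elim (fun _ => ((1 : ℤ), (0 : ℤ))) (fun _ => ((0 : ℤ), (1 : ℤ)))

variable {m n : ℕ}

/-- A (representative of a) point of `P^m × P^n`. -/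
abbrev BiPt (m n : ℕ) : Type := (Fin (m+1) → K) × (Fin (n+1) → K)

/-- `F` is bihomogeneous of degree `d`. -/
def IsBihom (F : BiRing K m n) (d : ℤ × ℤ) : Prop :=
  IsWeightedHomogeneous (biwt m n) F d

/-- Evaluation of a polynomial at (a representative of) a point. -/
def evalB (p : BiPt K m n) (F : BiRing K m n) : K :=
  eval (Sum.elim p.1 p.2) F

/-- A finset of representatives is a good configuration of points of
`P^m × P^n`: all representatives are nonzero, and proportional
representatives coincide (so distinct elements are distinct projective
points, and images under the two projections behave correctly). -/
def GoodConfig (𝕏 : Finset (BiPt K m n)) : Prop :=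
  (∀ p ∈ 𝕏, p.1 ≠ 0 ∧ p.2 ≠ 0) ∧
  (∀ p ∈ 𝕏, ∀ q ∈ 𝕏, (∃ c : K, c ≠ 0 ∧ p.1 = c • q.1) → p.1 = q.1) ∧
  (∀ p ∈ 𝕏, ∀ q ∈ 𝕏, (∃ c : K, c ≠ 0 ∧ p.2 = c • q.2) → p.2 = q.2)

/-- The bihomogeneous vanishing ideal `I_𝕏` of a set of points. -/
def vIdealB (𝕏 : Finset (BiPt K m n)) : Ideal (BiRing K m n) :=
  Ideal.span {F | (∃ d, IsBihom K F d) ∧ ∀ p ∈ 𝕏, evalB K p F = 0}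

/-- The bihomogeneous vanishing ideal of a single point. -/
def ptIdealB (p : BiPt K m n) : Ideal (BiRing K m n) :=
  Ideal.span {F | (∃ d, IsBihom K F d) ∧ evalB K p F = 0}

/-- The degree-`d` piece of `S/I`. -/
def degPieceB (I : Ideal (BiRing K m n)) (d : ℤ × ℤ) :
    Submodule K (BiRing K m n ⧸ I) :=
  (weightedHomogeneousSubmodule K (biwt m n) d).map
    (Ideal.Quotient.mkₐ K I).toLinearMap

/-- The Hilbert function of `S/I`. -/
def HFI (I : Ideal (BiRing K m n)) (d : ℤ × ℤ) : ℕ :=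
  Module.finrank K (degPieceB K I d)

/-- The Hilbert function of a set of points in `P^m × P^n`. -/
def HFB (𝕏 : Finset (BiPt K m n)) (d : ℤ × ℤ) : ℕ :=
  HFI K (vIdealB K 𝕏) d

/-- The Hilbert function of a (bihomogeneous) ideal `J` of `R_𝕏 = S/I`. -/
def HFIdealB (I : Ideal (BiRing K m n)) (J : Ideal (BiRing K m n ⧸ I))
    (d : ℤ × ℤ) : ℕ :=
  Module.finrank K ↥((Submodule.restrictScalars K J) ⊓ degPieceB K I d)

/- ### Single projective space `P^N` -/

/-- The coordinate ring `K[X_0,…,X_N]` of `P^N`. -/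
abbrev PRing (N : ℕ) : Type := MvPolynomial (Fin (N+1)) K

/-- The standard grading on `K[X_0,…,X_N]` (with values in `ℤ`). -/
def wt1 (N : ℕ) : Fin (N+1) → ℤ := fun _ => 1

/-- `F` is homogeneous of degree `d`. -/
def IsHom1 {N : ℕ} (F : PRing K N) (d : ℤ) : Prop :=
  IsWeightedHomogeneous (wt1 N) F d

/-- A good finite set of representatives of points in `P^N`. -/
def GoodSet {N : ℕ} (Y : Finset (Fin (N+1) → K)) : Prop :=
  (∀ q ∈ Y, q ≠ 0) ∧
  (∀ p ∈ Y, ∀ q ∈ Y, (∃ c : K, c ≠ 0 ∧ p = c • q) → p = q)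

/-- The homogeneous vanishing ideal of a set of points in `P^N`. -/
def vIdeal1 {N : ℕ} (Y : Finset (Fin (N+1) → K)) : Ideal (PRing K N) :=
  Ideal.span {F | (∃ d, IsHom1 K F d) ∧ ∀ q ∈ Y, eval q F = 0}

/-- The degree-`d` piece of `K[X_0,…,X_N]/I`. -/
def degPiece1 {N : ℕ} (I : Ideal (PRing K N)) (d : ℤ) :
    Submodule K (PRing K N ⧸ I) :=
  (weightedHomogeneousSubmodule K (wt1 N) d).map
    (Ideal.Quotient.mkₐ K I).toLinearMap

/-- The Hilbert function of a set of points in `P^N`. -/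
def HF1 {N : ℕ} (Y : Finset (Fin (N+1) → K)) (d : ℤ) : ℕ :=
  Module.finrank K (degPiece1 K (vIdeal1 K Y) d)

/-- The Hilbert function of a homogeneous ideal of `K[X_0,…,X_N]/I`. -/
def HFIdeal1 {N : ℕ} (I : Ideal (PRing K N)) (J : Ideal (PRing K N ⧸ I))
    (d : ℤ) : ℕ :=
  Module.finrank K ↥((Submodule.restrictScalars K J) ⊓ degPiece1 K I d)

/-- The degree `deg_Y(q)` of a point `q` in `Y ⊆ P^N`: the minimal degree of
a homogeneous separator of `q` in `Y`. -/
def deg1 {N : ℕ} (Y : Finset (Fin (N+1) → K)) (q : Fin (N+1) → K) : ℕ :=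
  sInf {d : ℕ | ∃ F : PRing K N, IsHom1 K F (d : ℤ) ∧ eval q F ≠ 0 ∧
    ∀ q' ∈ Y, q' ≠ q → eval q' F = 0}

/-- The regularity index of the Hilbert function of `Y ⊆ P^N`. -/
def regIndex1 {N : ℕ} (Y : Finset (Fin (N+1) → K)) : ℕ :=
  sInf {r : ℕ | ∀ i : ℕ, r ≤ i → HF1 K Y (i : ℤ) = Y.card}

/-- `Y ⊆ P^N` is a Cayley-Bacharach scheme. -/
def IsCB1 {N : ℕ} (Y : Finset (Fin (N+1) → K)) : Prop :=
  ∀ q ∈ Y, deg1 K Y q = regIndex1 K Y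

/- ### Kähler differents -/

/-- The variables `X_1,…,X_m,Y_1,…,Y_n` indexed by `Fin (m+n)`. -/
def bvar (m n : ℕ) (v : Fin (m+n)) : Fin (m+1) ⊕ Fin (n+1) :=
  if h : (v : ℕ) < m then Sum.inl ⟨(v : ℕ) + 1, by omega⟩
  else Sum.inr ⟨(v : ℕ) - m + 1, by have hv := v.isLt; omega⟩

/-- The Kähler different of `R = S/I` w.r.t. a system of generators `F` of
`I`: the ideal generated by the `(m+n)×(m+n)`-minors of the Jacobian matrix
`(∂F_k/∂X_i, ∂F_k/∂Y_j)`. -/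
def kdiffB (I : Ideal (BiRing K m n)) {r : ℕ} (F : Fin r → BiRing K m n) :
    Ideal (BiRing K m n ⧸ I) :=
  Ideal.span (Set.range fun ρ : Fin (m+n) → Fin r =>
    Ideal.Quotient.mk I (Matrix.det (Matrix.of fun u v : Fin (m+n) =>
      pderiv (bvar m n v) (F (ρ u)))))

/-- The Kähler different of `K[X_0,…,X_N]/I` w.r.t. a system of generators
`F` of `I` (minors w.r.t. the variables `X_1,…,X_N`). -/
def kdiff1 {N : ℕ} (I : Ideal (PRing K N)) {r : ℕ} (F : Fin r → PRing K N) :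
    Ideal (PRing K N ⧸ I) :=
  Ideal.span (Set.range fun ρ : Fin N → Fin r =>
    Ideal.Quotient.mk I (Matrix.det (Matrix.of fun u v : Fin N =>
      pderiv (Fin.succ v) (F (ρ u)))))

/-- The extension `ϑ_{𝕏₁} R_𝕏` to `R_𝕏 = S/I` of the Kähler different of
`𝕏₁ ⊆ P^m` computed from a system of generators `F` of `I_{𝕏₁}`. -/
def kdiffExtL (I : Ideal (BiRing K m n)) {r : ℕ} (F : Fin r → PRing K m) :
    Ideal (BiRing K m n ⧸ I) :=
  Ideal.span (Set.range fun ρ : Fin m → Fin r =>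
    Ideal.Quotient.mk I (rename Sum.inl (Matrix.det (Matrix.of fun u v : Fin m =>
      pderiv (Fin.succ v) (F (ρ u))))))

/-- The extension `ϑ_{𝕏₂} R_𝕏` to `R_𝕏 = S/I` of the Kähler different of
`𝕏₂ ⊆ P^n` computed from a system of generators `G` of `I_{𝕏₂}`. -/
def kdiffExtR (I : Ideal (BiRing K m n)) {r : ℕ} (G : Fin r → PRing K n) :
    Ideal (BiRing K m n ⧸ I) :=
  Ideal.span (Set.range fun ρ : Fin n → Fin r =>
    Ideal.Quotient.mk I (rename Sum.inr (Matrix.det (Matrix.of fun u v : Fin n =>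
      pderiv (Fin.succ v) (G (ρ u))))))

/- ### Regular sequences, ACM, complete intersections -/

/-- `a, b` form a regular sequence. -/
def RegPair {A : Type*} [CommRing A] (a b : A) : Prop :=
  (∀ z : A, a * z = 0 → z = 0) ∧
  (∀ z : A, b * z ∈ Ideal.span {a} → z ∈ Ideal.span {a})

/-- The image `x₀` of `X_0` in `S/I`. -/
def x0B (I : Ideal (BiRing K m n)) : BiRing K m n ⧸ I :=
  Ideal.Quotient.mk I (MvPolynomial.X (Sum.inl 0))

/-- The image `y₀` of `Y_0` in `S/I`. -/
def y0B (I : Ideal (BiRing K m n)) : BiRing K m n ⧸ I :=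
  Ideal.Quotient.mk I (MvPolynomial.X (Sum.inr 0))

/-- The standing assumption for ACM sets of points: (after a change of
coordinates) `x₀, y₀` form a regular sequence in `R_𝕏`. -/
def ACMxy (𝕏 : Finset (BiPt K m n)) : Prop :=
  RegPair (x0B K (vIdealB K 𝕏)) (y0B K (vIdealB K 𝕏))

/-- `𝕏` is arithmetically Cohen-Macaulay: some bihomogeneous linear forms
`ℓ` of degree `(1,0)` and `ℓ'` of degree `(0,1)` give a regular sequence in
`R_𝕏` (for points this is equivalent to `depth R_𝕏 = 2`). -/
def IsACM (𝕏 : Finset (BiPt K m n)) : Prop :=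
  ∃ l l' : BiRing K m n, IsBihom K l (1, 0) ∧ IsBihom K l' (0, 1) ∧
    RegPair (Ideal.Quotient.mk (vIdealB K 𝕏) l) (Ideal.Quotient.mk (vIdealB K 𝕏) l')

/-- A regular sequence in a commutative ring, given as a list:
each entry is a non-zerodivisor modulo the preceding ones, and the list
generates a proper ideal. -/
def IsRegSeq {A : Type*} [CommRing A] (l : List A) : Prop :=
  (∀ (i : ℕ) (h : i < l.length), ∀ z : A,
      l.get ⟨i, h⟩ * z ∈ Ideal.span {x | x ∈ l.take i} →
      z ∈ Ideal.span {x | x ∈ l.take i}) ∧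
  Ideal.span {x | x ∈ l} ≠ ⊤

/-- `𝕏` is a complete intersection of type `(d_1,…,d_m,d'_1,…,d'_n)`. -/
def IsCIB (𝕏 : Finset (BiPt K m n)) (d : Fin m → ℕ) (d' : Fin n → ℕ) : Prop :=
  ∃ (F : Fin m → BiRing K m n) (G : Fin n → BiRing K m n),
    (∀ i, IsBihom K (F i) ((d i : ℤ), 0)) ∧
    (∀ j, IsBihom K (G j) (0, (d' j : ℤ))) ∧
    IsRegSeq (List.ofFn F ++ List.ofFn G) ∧
    Ideal.span (Set.range F ∪ Set.range G) = vIdealB K 𝕏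

/-- `Y ⊆ P^N` is a complete intersection of type `(d_1,…,d_N)`. -/
def IsCI1 {N : ℕ} (Y : Finset (Fin (N+1) → K)) (d : Fin N → ℕ) : Prop :=
  ∃ F : Fin N → PRing K N,
    (∀ i, IsHom1 K (F i) (d i : ℤ)) ∧
    IsRegSeq (List.ofFn F) ∧
    Ideal.span (Set.range F) = vIdeal1 K Y

/- ### Separators and the Cayley-Bacharach property -/

/-- `F` is a separator of `p` in `𝕏`. -/
def IsSepB (𝕏 : Finset (BiPt K m n)) (p : BiPt K m n) (F : BiRing K m n) : Prop :=
  evalB K p F ≠ 0 ∧ ∀ q ∈ 𝕏, q ≠ p → evalB K q F = 0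

/-- The set of degrees of bihomogeneous separators of `p` in `𝕏`. -/
def sepDegsB (𝕏 : Finset (BiPt K m n)) (p : BiPt K m n) : Set (ℤ × ℤ) :=
  {d | ∃ F, IsBihom K F d ∧ IsSepB K 𝕏 p F}

/-- `deg_𝕏(p)`: the set of degrees of minimal separators of `p` in `𝕏`
(mimimality w.r.t. the componentwise order). -/
def minSepDegsB (𝕏 : Finset (BiPt K m n)) (p : BiPt K m n) : Set (ℤ × ℤ) :=
  {d ∈ sepDegsB K 𝕏 p | ∀ d' ∈ sepDegsB K 𝕏 p, ¬ d' < d}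

/-- `𝕏` has the Cayley-Bacharach property: the Hilbert function of
`𝕏 \ {p}` is independent of the choice of `p ∈ 𝕏`. -/
def HasCB (𝕏 : Finset (BiPt K m n)) : Prop :=
  ∀ p ∈ 𝕏, ∀ q ∈ 𝕏, ∀ d : ℤ × ℤ, HFB K (𝕏.erase p) d = HFB K (𝕏.erase q) d

/- ### Star property and fibres -/

/-- The `(⋆)`-property. -/
def StarProp (𝕏 : Finset (BiPt K m n)) : Prop :=
  ∀ p ∈ 𝕏, ∀ q ∈ 𝕏, ((p.1, q.2) ∈ 𝕏 ∨ (q.1, p.2) ∈ 𝕏)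

/-- `V_j = π₁(π₂⁻¹(q'_j) ∩ 𝕏)` for `q'_j = p.2`. -/
def Vset (𝕏 : Finset (BiPt K m n)) (p : BiPt K m n) : Finset (Fin (m+1) → K) :=
  (𝕏.filter fun q => q.2 = p.2).image Prod.fst

/-- `W_i = π₂(π₁⁻¹(q_i) ∩ 𝕏)` for `q_i = p.1`. -/
def Wset (𝕏 : Finset (BiPt K m n)) (p : BiPt K m n) : Finset (Fin (n+1) → K) :=
  (𝕏.filter fun q => q.1 = p.1).image Prod.snd

end MultiProjPoints

/-!
The coordinate ring of a product configuration is the tensor product over `K` of the coordinate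
rings `R₁` and `R₂` of its factors. Indeed `S / (I_{𝕏₁} S + I_{𝕏₂} S) ≅ R₁ ⊗ R₂`, and a
bihomogeneous form of degree `(d, e)` becomes an element of `(R₁)_d ⊗ (R₂)_e`. The points of `𝕏ᵢ`
separate the elements of each graded piece of `Rᵢ`, so pairs of points separate the elements of
the tensor product: a form vanishing on `𝕏₁ × 𝕏₂` is zero in `R₁ ⊗ R₂`. The product formula for
the Hilbert functions is then multiplicativity of dimension. A linear form vanishing at no point
of `𝕏ᵢ` is a nonzerodivisor in `Rᵢ`, and by flatness over `K` two such forms give a regular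
sequence `ℓ₁ ⊗ 1, 1 ⊗ ℓ₂`.
-/

namespace MultiProjPoints

open TensorProduct
open scoped nonZeroDivisors

section RegularPairs

lemma RegPair.of_ringEquiv {A B : Type*} [CommRing A] [CommRing B] (e : A ≃+* B) {a b : A}
    (h : RegPair (e a) (e b)) : RegPair a b := by
  have mem_span_iff (z : A) : e z ∈ Ideal.span {e a} ↔ z ∈ Ideal.span {a} := by
    simp only [Ideal.mem_span_singleton, map_dvd_iff]
  refine ⟨fun z hz => ?_, fun z hz => ?_⟩
  · exact (map_eq_zero_iff e e.injective).1 (h.1 _ (by rw [← map_mul, hz, map_zero]))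
  · exact (mem_span_iff z).1 (h.2 _ (by rwa [← map_mul, mem_span_iff]))

lemma RegPair.mk_ker {A B : Type*} [CommRing A] [CommRing B] {f : A →+* B}
    (hf : Function.Surjective f) {a b : A} (h : RegPair (f a) (f b)) :
    RegPair (Ideal.Quotient.mk (RingHom.ker f) a) (Ideal.Quotient.mk (RingHom.ker f) b) :=
  .of_ringEquiv (RingHom.quotientKerEquivOfSurjective hf) h

variable {R A B : Type*} [CommRing R] [CommRing A] [CommRing B] [Algebra R A] [Algebra R B]

lemma tmul_one_mem_nonZeroDivisors [Module.Flat R B] {a : A} (ha : a ∈ A⁰) :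
    a ⊗ₜ[R] (1 : B) ∈ (A ⊗[R] B)⁰ :=
  mem_nonZeroDivisors_iff_right.2 fun z hz =>
    (Module.Flat.isSMulRegular_of_nonZeroDivisors ha).right_eq_zero_of_smul <| by
      rwa [Algebra.smul_def, mul_comm]

lemma one_tmul_mem_nonZeroDivisors [Module.Flat R A] {b : B} (hb : b ∈ B⁰) :
    (1 : A) ⊗ₜ[R] b ∈ (A ⊗[R] B)⁰ := by
  rw [← MulEquivClass.map_nonZeroDivisors (Algebra.TensorProduct.comm R B A)]
  exact ⟨b ⊗ₜ 1, tmul_one_mem_nonZeroDivisors hb, rfl⟩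

lemma regPair_tmul {a : A} {b : B} [Module.Flat R B] [Module.Flat R (A ⧸ Ideal.span {a})]
    (ha : a ∈ A⁰) (hb : b ∈ B⁰) : RegPair (a ⊗ₜ[R] (1 : B)) ((1 : A) ⊗ₜ[R] b) := by
  let π := Algebra.TensorProduct.map (Ideal.Quotient.mkₐ R (Ideal.span {a})) (AlgHom.id R B)
  have ker_π : RingHom.ker π = Ideal.span {a ⊗ₜ[R] (1 : B)} := by
    rw [Algebra.TensorProduct.rTensor_ker _ (Ideal.Quotient.mkₐ_surjective R _),
      AlgHom.ker_coe, Ideal.Quotient.mkₐ_ker, Ideal.map_span, Set.image_singleton]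
    rfl
  refine ⟨fun z => (mul_left_mem_nonZeroDivisors_eq_zero_iff (tmul_one_mem_nonZeroDivisors ha)).1,
    fun z hz => ?_⟩
  rw [← ker_π, RingHom.mem_ker] at hz ⊢
  refine (mul_left_mem_nonZeroDivisors_eq_zero_iff (one_tmul_mem_nonZeroDivisors hb)).1 ?_
  simpa [π] using hz

end RegularPairs

section TensorSeparation

variable {R V W ι κ : Type*} [CommRing R] [AddCommGroup V] [Module R V] [AddCommGroup W]
  [Module R W] [Module.Free R W]

lemma tensor_eq_zero_of_forall_rTensor_eq_zero {f : ι → Module.Dual R V}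
    (hf : ∀ v, (∀ i, f i v = 0) → v = 0) {t : V ⊗[R] W}
    (ht : ∀ i, (f i).rTensor W t = 0) : t = 0 := by
  let b := Module.Free.chooseBasis R W
  have naturality (i) : (equivFinsuppOfBasisRight b).toLinearMap ∘ₗ (f i).rTensor W =
      Finsupp.mapRange.linearMap (f i) ∘ₗ (equivFinsuppOfBasisRight b).toLinearMap :=
    TensorProduct.ext' fun v w => by ext; simp
  refine (equivFinsuppOfBasisRight b).map_eq_zero_iff.1 (Finsupp.ext fun k => hf _ fun i => ?_)
  have h := DFunLike.congr_fun (LinearMap.congr_fun (naturality i) t) k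
  simpa [ht i] using h.symm

lemma tensor_eq_zero_of_forall_dualDistrib_eq_zero {f : ι → Module.Dual R V}
    {g : κ → Module.Dual R W} (hf : ∀ v, (∀ i, f i v = 0) → v = 0)
    (hg : ∀ w, (∀ j, g j w = 0) → w = 0) {t : V ⊗[R] W}
    (ht : ∀ i j, dualDistrib R V W (f i ⊗ₜ g j) t = 0) : t = 0 := by
  refine tensor_eq_zero_of_forall_rTensor_eq_zero hf fun i => ?_
  have factor (j) : dualDistrib R V W (f i ⊗ₜ g j) =
      g j ∘ₗ (TensorProduct.lid R W).toLinearMap ∘ₗ (f i).rTensor W :=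
    TensorProduct.ext' fun v w => by simp
  refine (TensorProduct.lid R W).map_eq_zero_iff.1 (hg _ fun j => ?_)
  rw [← ht i j, factor]
  rfl

end TensorSeparation

section WeightedHomogeneous

variable {R σ τ M N : Type*} [CommSemiring R] [AddCommMonoid M] [AddCommMonoid N]

lemma isWeightedHomogeneous_rename {w : σ → M} {w' : τ → N} {f : σ → τ} (φ : M →+ N)
    (hw : ∀ i, w' (f i) = φ (w i)) {p : MvPolynomial σ R} {d : M}
    (hp : IsWeightedHomogeneous w p d) : IsWeightedHomogeneous w' (rename f p) (φ d) := by
  have weight_mapDomain (e : σ →₀ ℕ) :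
      Finsupp.weight w' (e.mapDomain f) = φ (Finsupp.weight w e) := by
    simp only [Finsupp.weight_apply, map_finsuppSum, map_nsmul, ← hw]
    exact Finsupp.sum_mapDomain_index (fun _ => zero_nsmul _) fun _ _ _ => add_nsmul _ _ _
  induction hp using IsWeightedHomogeneous.induction_on with
  | zero => simpa only [map_zero] using isWeightedHomogeneous_zero R w' (φ d)
  | add p q _ _ hp hq => simpa only [map_add] using hp.add hq
  | monomial e r he =>
    rw [rename_monomial]
    exact isWeightedHomogeneous_monomial _ _ _ (by rw [weight_mapDomain, he])

/-- The weights on the disjoint union of two sets of variables that make the polynomial ring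
bigraded by the weights on each of the two sets. -/
def sumWeight (w₁ : σ → M) (w₂ : τ → N) : σ ⊕ τ → M × N :=
  Sum.elim (fun i => (w₁ i, 0)) (fun j => (0, w₂ j))

variable {w₁ : σ → M} {w₂ : τ → N}

lemma isWeightedHomogeneous_rename_inl {p : MvPolynomial σ R} {d : M}
    (hp : IsWeightedHomogeneous w₁ p d) :
    IsWeightedHomogeneous (sumWeight w₁ w₂) (rename Sum.inl p) (d, 0) :=
  isWeightedHomogeneous_rename (w' := sumWeight w₁ w₂) (f := Sum.inl)
    (AddMonoidHom.inl M N) (fun _ => rfl) hp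

lemma isWeightedHomogeneous_rename_inr {p : MvPolynomial τ R} {e : N}
    (hp : IsWeightedHomogeneous w₂ p e) :
    IsWeightedHomogeneous (sumWeight w₁ w₂) (rename Sum.inr p) (0, e) :=
  isWeightedHomogeneous_rename (w' := sumWeight w₁ w₂) (f := Sum.inr)
    (AddMonoidHom.inr M N) (fun _ => rfl) hp

lemma weight_sumWeight_sumElim (a : σ →₀ ℕ) (b : τ →₀ ℕ) :
    Finsupp.weight (sumWeight w₁ w₂) (a.sumElim b) =
      (Finsupp.weight w₁ a, Finsupp.weight w₂ b) := by
  simp only [Finsupp.weight_apply, Finsupp.sum_sumElim]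
  ext <;> simp [Finsupp.sum, sumWeight, Prod.fst_sum, Prod.snd_sum]

lemma weightedHomogeneousSubmodule_sumWeight (d : M) (e : N) :
    weightedHomogeneousSubmodule R (sumWeight w₁ w₂) (d, e) =
      (weightedHomogeneousSubmodule R w₁ d).map (rename Sum.inl).toLinearMap *
        (weightedHomogeneousSubmodule R w₂ e).map (rename Sum.inr).toLinearMap := by
  refine le_antisymm (fun p hp => ?_) (Submodule.mul_le.2 ?_)
  · induction hp using IsWeightedHomogeneous.induction_on with
    | zero => exact zero_mem _
    | add p q _ _ hp hq => exact add_mem hp hq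
    | monomial c r hc =>
      obtain ⟨⟨a, b⟩, rfl⟩ := Finsupp.sumFinsuppEquivProdFinsupp.symm.surjective c
      obtain ⟨ha, hb⟩ := Prod.ext_iff.1 ((weight_sumWeight_sumElim a b).symm.trans hc)
      have factor : monomial (a.sumElim b) r =
          rename Sum.inl (monomial a r) * rename Sum.inr (monomial b 1) := by
        rw [rename_monomial, rename_monomial, monomial_mul, mul_one, Finsupp.sumElim_eq_add]
      exact factor ▸ Submodule.mul_mem_mul
        ⟨_, isWeightedHomogeneous_monomial _ _ _ ha, rfl⟩
        ⟨_, isWeightedHomogeneous_monomial _ _ _ hb, rfl⟩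
  · rintro _ ⟨p, hp, rfl⟩ _ ⟨q, hq, rfl⟩
    simpa using (isWeightedHomogeneous_rename_inl hp).mul (isWeightedHomogeneous_rename_inr hq)

end WeightedHomogeneous

section HomogeneousVanishingIdeal

variable {K σ τ M N : Type*} [Field K] [AddCommMonoid M] [AddCommMonoid N]

/-- The ideal generated by the weighted homogeneous polynomials vanishing on `Y`: the ideal of the
image of `Y` in the (multi)projective space whose coordinate ring is graded by `w`. -/
def homogeneousVanishingIdeal (w : σ → M) (Y : Set (σ → K)) : Ideal (MvPolynomial σ K) :=
  Ideal.span {F | (∃ d, IsWeightedHomogeneous w F d) ∧ ∀ y ∈ Y, eval y F = 0}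

variable {w : σ → M} {Y : Set (σ → K)}

lemma eval_eq_zero_of_mem_homogeneousVanishingIdeal {F : MvPolynomial σ K}
    (hF : F ∈ homogeneousVanishingIdeal w Y) {y : σ → K} (hy : y ∈ Y) : eval y F = 0 :=
  (Ideal.span_le (I := RingHom.ker (eval y))).2 (fun _ hG => hG.2 y hy) hF

lemma map_rename_homogeneousVanishingIdeal_le {w' : τ → N} {f : σ → τ} (φ : M →+ N)
    (hw : ∀ i, w' (f i) = φ (w i)) {Z : Set (τ → K)} (hZ : ∀ z ∈ Z, z ∘ f ∈ Y) :
    (homogeneousVanishingIdeal w Y).map (rename f : MvPolynomial σ K →ₐ[K] MvPolynomial τ K) ≤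
      homogeneousVanishingIdeal w' Z := by
  refine Ideal.map_le_iff_le_comap.2 (Ideal.span_le.2 ?_)
  rintro F ⟨⟨d, hF⟩, hFY⟩
  refine Ideal.subset_span ⟨⟨φ d, isWeightedHomogeneous_rename φ hw hF⟩, fun z hz => ?_⟩
  rw [eval_rename]
  exact hFY _ (hZ z hz)

lemma mk_mem_nonZeroDivisors_of_forall_eval_ne_zero {M : Type*} [AddCancelCommMonoid M]
    {w : σ → M} {l : MvPolynomial σ K} {d : M} (hl : IsWeightedHomogeneous w l d)
    (hlY : ∀ y ∈ Y, eval y l ≠ 0) :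
    Ideal.Quotient.mk (homogeneousVanishingIdeal w Y) l ∈
      (MvPolynomial σ K ⧸ homogeneousVanishingIdeal w Y)⁰ := by
  classical
  let _ := weightedGradedAlgebra K w
  have homogeneous : (homogeneousVanishingIdeal w Y).IsHomogeneous
      (weightedHomogeneousSubmodule K w) := Ideal.homogeneous_span _ _ fun _ hF => hF.1
  refine mem_nonZeroDivisors_iff_left.2 fun z hz => ?_
  obtain ⟨F, rfl⟩ := Ideal.Quotient.mk_surjective z
  rw [← map_mul, Ideal.Quotient.eq_zero_iff_mem, homogeneous.mem_iff] at hz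
  rw [Ideal.Quotient.eq_zero_iff_mem, homogeneous.mem_iff]
  intro e
  have mul_component := hz (d + e)
  rw [DirectSum.coe_decompose_mul_add_of_left_mem _ hl] at mul_component
  refine Ideal.subset_span ⟨⟨e, (DirectSum.decompose (weightedHomogeneousSubmodule K w) F e).2⟩,
    fun y hy => ?_⟩
  have mul_eval := eval_eq_zero_of_mem_homogeneousVanishingIdeal mul_component hy
  rw [map_mul] at mul_eval
  exact (mul_eq_zero.1 mul_eval).resolve_left (hlY y hy)

lemma exists_isWeightedHomogeneous_const_forall_eval_ne_zero [Infinite K] [Finite σ] (a : M)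
    (hY : Y.Finite) (hY0 : ∀ y ∈ Y, y ≠ 0) :
    ∃ l : MvPolynomial σ K, IsWeightedHomogeneous (fun _ => a) l a ∧ ∀ y ∈ Y, eval y l ≠ 0 := by
  classical
  have := Fintype.ofFinite σ
  have := hY.to_subtype
  obtain ⟨φ, hφ⟩ := Module.exists_dual_forall_apply_ne_zero (K := K) ((↑) : Y → σ → K)
    fun y => hY0 y y.2
  refine ⟨∑ i, C (φ fun j => if i = j then 1 else 0) * X i, ?_, fun y hy => ?_⟩
  · exact IsWeightedHomogeneous.sum _ _ _ fun i _ =>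
      (isWeightedHomogeneous_X K (fun _ => a) i).C_mul _
  · have φ_ne_zero := hφ ⟨y, hy⟩
    rw [LinearMap.pi_apply_eq_sum_univ φ] at φ_ne_zero
    simpa [mul_comm] using φ_ne_zero

/-- Evaluation at a point of `Y`, on the coordinate ring of `Y`. -/
def evalQuotient (w : σ → M) {Y : Set (σ → K)} (y : Y) :
    (MvPolynomial σ K ⧸ homogeneousVanishingIdeal w Y) →ₐ[K] K :=
  Ideal.Quotient.liftₐ _ (aeval y.1) fun _ hF =>
    eval_eq_zero_of_mem_homogeneousVanishingIdeal hF y.2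

@[simp]
lemma evalQuotient_mk (y : Y) (F : MvPolynomial σ K) :
    evalQuotient w y (Ideal.Quotient.mk _ F) = eval y.1 F := rfl

lemma eq_zero_of_forall_evalQuotient_eq_zero {d : M}
    {v : MvPolynomial σ K ⧸ homogeneousVanishingIdeal w Y}
    (hv : v ∈ (weightedHomogeneousSubmodule K w d).map (Ideal.Quotient.mkₐ K _).toLinearMap)
    (h : ∀ y : Y, evalQuotient w y v = 0) : v = 0 := by
  obtain ⟨F, hF, rfl⟩ := hv
  exact Ideal.Quotient.eq_zero_iff_mem.2 (Ideal.subset_span ⟨⟨d, hF⟩, fun y hy => h ⟨y, hy⟩⟩)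

end HomogeneousVanishingIdeal

section SumToTensor

variable {R σ τ A B : Type*} [CommRing R] [CommRing A] [CommRing B] [Algebra R A] [Algebra R B]

lemma tensorEquivSum_tmul_one (p : MvPolynomial σ R) :
    tensorEquivSum R σ τ R (p ⊗ₜ 1) = rename Sum.inl p := by
  have h : (tensorEquivSum R σ τ R).toAlgHom.comp Algebra.TensorProduct.includeLeft =
      rename Sum.inl := by
    ext i
    simp
  exact DFunLike.congr_fun h p

lemma tensorEquivSum_one_tmul (q : MvPolynomial τ R) :
    tensorEquivSum R σ τ R (1 ⊗ₜ q) = rename Sum.inr q := by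
  have h : (tensorEquivSum R σ τ R).toAlgHom.comp Algebra.TensorProduct.includeRight =
      rename Sum.inr := by
    ext i
    simp
  exact DFunLike.congr_fun h q

variable (f : MvPolynomial σ R →ₐ[R] A) (g : MvPolynomial τ R →ₐ[R] B)

/-- The map `R[σ ⊕ τ] ≃ R[σ] ⊗ R[τ] → A ⊗ B` induced by `f : R[σ] → A` and `g : R[τ] → B`. -/
def sumToTensor : MvPolynomial (σ ⊕ τ) R →ₐ[R] A ⊗[R] B :=
  (Algebra.TensorProduct.map f g).comp (tensorEquivSum R σ τ R).symm.toAlgHom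

@[simp]
lemma sumToTensor_rename_inl (p : MvPolynomial σ R) :
    sumToTensor f g (rename Sum.inl p) = f p ⊗ₜ 1 := by
  simp [sumToTensor, ← tensorEquivSum_tmul_one]

@[simp]
lemma sumToTensor_rename_inr (q : MvPolynomial τ R) :
    sumToTensor f g (rename Sum.inr q) = 1 ⊗ₜ g q := by
  simp [sumToTensor, ← tensorEquivSum_one_tmul]

variable {f g}

lemma sumToTensor_surjective (hf : Function.Surjective f) (hg : Function.Surjective g) :
    Function.Surjective (sumToTensor f g) :=
  (Algebra.TensorProduct.map_surjective f g hf hg).comp (tensorEquivSum R σ τ R).symm.surjective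

lemma ker_sumToTensor (hf : Function.Surjective f) (hg : Function.Surjective g) :
    RingHom.ker (sumToTensor f g) =
      (RingHom.ker f).map (rename Sum.inl : _ →ₐ[R] MvPolynomial (σ ⊕ τ) R) ⊔
        (RingHom.ker g).map (rename Sum.inr : _ →ₐ[R] MvPolynomial (σ ⊕ τ) R) := by
  let e := tensorEquivSum R σ τ R
  have e_comp_includeLeft : e.toRingHom.comp
      (Algebra.TensorProduct.includeLeft : _ →ₐ[R] MvPolynomial σ R ⊗[R] _).toRingHom =
      (rename Sum.inl : _ →ₐ[R] MvPolynomial (σ ⊕ τ) R).toRingHom :=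
    RingHom.ext tensorEquivSum_tmul_one
  have e_comp_includeRight : e.toRingHom.comp
      (Algebra.TensorProduct.includeRight : _ →ₐ[R] _ ⊗[R] MvPolynomial τ R).toRingHom =
      (rename Sum.inr : _ →ₐ[R] MvPolynomial (σ ⊕ τ) R).toRingHom :=
    RingHom.ext tensorEquivSum_one_tmul
  calc RingHom.ker (sumToTensor f g)
      = (RingHom.ker (Algebra.TensorProduct.map f g)).map e.toRingHom :=
        Ideal.comap_symm (I := RingHom.ker (Algebra.TensorProduct.map f g)) e.toRingEquiv
    _ = _ := by
      rw [Algebra.TensorProduct.map_ker f g hf hg, Ideal.map_sup]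
      exact congrArg₂ _ ((Ideal.map_map _ _).trans (congrArg (Ideal.map · _) e_comp_includeLeft))
        ((Ideal.map_map _ _).trans (congrArg (Ideal.map · _) e_comp_includeRight))

lemma map_sumToTensor_weightedHomogeneousSubmodule {M N : Type*} [AddCommMonoid M]
    [AddCommMonoid N] (w₁ : σ → M) (w₂ : τ → N) (d : M) (e : N) :
    (weightedHomogeneousSubmodule R (sumWeight w₁ w₂) (d, e)).map (sumToTensor f g).toLinearMap =
      LinearMap.range (mapIncl ((weightedHomogeneousSubmodule R w₁ d).map f.toLinearMap)
        ((weightedHomogeneousSubmodule R w₂ e).map g.toLinearMap)) := by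
  rw [weightedHomogeneousSubmodule_sumWeight, range_mapIncl, Submodule.map₂_map_map,
    Submodule.map_mul, ← Submodule.map_comp, ← Submodule.map_comp, Submodule.mul_eq_map₂,
    Submodule.map₂_map_map]
  congr 1
  ext
  simp

end SumToTensor

section TensorComparison

lemma eq_zero_of_forall_productMap_eq_zero {R A B ι κ : Type*} [CommRing R] [CommRing A]
    [CommRing B] [Algebra R A] [Algebra R B] {P : Submodule R A} {Q : Submodule R B}
    [Module.Free R Q] {f : ι → A →ₐ[R] R} {g : κ → B →ₐ[R] R}
    (hf : ∀ v ∈ P, (∀ i, f i v = 0) → v = 0) (hg : ∀ w ∈ Q, (∀ j, g j w = 0) → w = 0)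
    {t : A ⊗[R] B} (ht : t ∈ LinearMap.range (mapIncl P Q))
    (h : ∀ i j, Algebra.TensorProduct.productMap (f i) (g j) t = 0) : t = 0 := by
  obtain ⟨s, rfl⟩ := ht
  have separate_P (v : P) (hv : ∀ i, ((f i).toLinearMap ∘ₗ P.subtype) v = 0) : v = 0 :=
    Subtype.ext (hf v v.2 hv)
  have separate_Q (w : Q) (hw : ∀ j, ((g j).toLinearMap ∘ₗ Q.subtype) w = 0) : w = 0 :=
    Subtype.ext (hg w w.2 hw)
  have productMap_mapIncl (i j) :
      dualDistrib R P Q (((f i).toLinearMap ∘ₗ P.subtype) ⊗ₜ ((g j).toLinearMap ∘ₗ Q.subtype)) =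
        (Algebra.TensorProduct.productMap (f i) (g j)).toLinearMap ∘ₗ mapIncl P Q :=
    TensorProduct.ext' fun v w => by simp [mapIncl]
  rw [tensor_eq_zero_of_forall_dualDistrib_eq_zero separate_P separate_Q (t := s)
    fun i j => by rw [productMap_mapIncl]; exact h i j, map_zero]

lemma finrank_range_mapIncl {K V W : Type*} [Field K] [AddCommGroup V] [Module K V]
    [AddCommGroup W] [Module K W] (P : Submodule K V) (Q : Submodule K W) :
    Module.finrank K (LinearMap.range (mapIncl P Q)) =
      Module.finrank K P * Module.finrank K Q := by
  rw [LinearMap.finrank_range_of_inj (Module.Flat.tensorProduct_mapIncl_injective_of_right P Q),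
    Module.finrank_tensorProduct]

lemma finrank_map_mkₐ_ker {R A B : Type*} [CommRing R] [CommRing A] [CommRing B] [Algebra R A]
    [Algebra R B] {f : A →ₐ[R] B} (hf : Function.Surjective f) (P : Submodule R A) :
    Module.finrank R (P.map (Ideal.Quotient.mkₐ R (RingHom.ker f)).toLinearMap) =
      Module.finrank R (P.map f.toLinearMap) := by
  rw [← LinearEquiv.finrank_map_eq (Ideal.quotientKerAlgEquivOfSurjective hf).toLinearEquiv,
    ← Submodule.map_comp]
  rfl

variable {K σ τ M N : Type*} [Field K] [AddCommMonoid M] [AddCommMonoid N]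

lemma ker_sumToTensor_mkₐ (I : Ideal (MvPolynomial σ K)) (J : Ideal (MvPolynomial τ K)) :
    RingHom.ker (sumToTensor (Ideal.Quotient.mkₐ K I) (Ideal.Quotient.mkₐ K J)) =
      I.map (rename Sum.inl : _ →ₐ[K] MvPolynomial (σ ⊕ τ) K) ⊔
        J.map (rename Sum.inr : _ →ₐ[K] MvPolynomial (σ ⊕ τ) K) := by
  rw [ker_sumToTensor (Ideal.Quotient.mkₐ_surjective K I) (Ideal.Quotient.mkₐ_surjective K J),
    AlgHom.ker_coe, AlgHom.ker_coe, Ideal.Quotient.mkₐ_ker, Ideal.Quotient.mkₐ_ker]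

lemma sumToTensor_mkₐ_surjective (I : Ideal (MvPolynomial σ K)) (J : Ideal (MvPolynomial τ K)) :
    Function.Surjective (sumToTensor (Ideal.Quotient.mkₐ K I) (Ideal.Quotient.mkₐ K J)) :=
  sumToTensor_surjective (Ideal.Quotient.mkₐ_surjective K I) (Ideal.Quotient.mkₐ_surjective K J)

lemma regPair_mk_rename {I : Ideal (MvPolynomial σ K)} {J : Ideal (MvPolynomial τ K)}
    {L : Ideal (MvPolynomial (σ ⊕ τ) K)}
    (hL : L = I.map (rename Sum.inl : _ →ₐ[K] MvPolynomial (σ ⊕ τ) K) ⊔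
      J.map (rename Sum.inr : _ →ₐ[K] MvPolynomial (σ ⊕ τ) K))
    {a : MvPolynomial σ K} {b : MvPolynomial τ K}
    (ha : Ideal.Quotient.mk I a ∈ (MvPolynomial σ K ⧸ I)⁰)
    (hb : Ideal.Quotient.mk J b ∈ (MvPolynomial τ K ⧸ J)⁰) :
    RegPair (Ideal.Quotient.mk L (rename Sum.inl a)) (Ideal.Quotient.mk L (rename Sum.inr b)) := by
  rw [hL, ← ker_sumToTensor_mkₐ]
  refine RegPair.mk_ker (f := (sumToTensor _ _).toRingHom) (sumToTensor_mkₐ_surjective I J) ?_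
  simpa using regPair_tmul (R := K) ha hb

lemma finrank_map_mkₐ_sup_weightedHomogeneousSubmodule (I : Ideal (MvPolynomial σ K))
    (J : Ideal (MvPolynomial τ K)) (w₁ : σ → M) (w₂ : τ → N) (d : M) (e : N) :
    Module.finrank K ((weightedHomogeneousSubmodule K (sumWeight w₁ w₂) (d, e)).map
        (Ideal.Quotient.mkₐ K (I.map (rename Sum.inl : _ →ₐ[K] MvPolynomial (σ ⊕ τ) K) ⊔
          J.map (rename Sum.inr : _ →ₐ[K] MvPolynomial (σ ⊕ τ) K))).toLinearMap) =
      Module.finrank K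
          ((weightedHomogeneousSubmodule K w₁ d).map (Ideal.Quotient.mkₐ K I).toLinearMap) *
        Module.finrank K
          ((weightedHomogeneousSubmodule K w₂ e).map (Ideal.Quotient.mkₐ K J).toLinearMap) := by
  rw [← ker_sumToTensor_mkₐ, finrank_map_mkₐ_ker (sumToTensor_mkₐ_surjective I J),
    map_sumToTensor_weightedHomogeneousSubmodule, finrank_range_mapIncl]

variable {w₁ : σ → M} {w₂ : τ → N} {Y : Set (σ → K)} {Z : Set (τ → K)}

lemma productMap_evalQuotient_sumToTensor (y : Y) (z : Z) (F : MvPolynomial (σ ⊕ τ) K) :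
    Algebra.TensorProduct.productMap (evalQuotient w₁ y) (evalQuotient w₂ z)
        (sumToTensor (Ideal.Quotient.mkₐ K _) (Ideal.Quotient.mkₐ K _) F) =
      eval (Sum.elim y.1 z.1) F := by
  have h : (Algebra.TensorProduct.productMap (evalQuotient w₁ y) (evalQuotient w₂ z)).comp
      (sumToTensor (Ideal.Quotient.mkₐ K _) (Ideal.Quotient.mkₐ K _)) =
      aeval (Sum.elim y.1 z.1) := by
    ext (i | j)
    · rw [AlgHom.comp_apply, ← rename_X, sumToTensor_rename_inl]
      simp
    · rw [AlgHom.comp_apply, ← rename_X, sumToTensor_rename_inr]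
      simp
  exact DFunLike.congr_fun h F

theorem homogeneousVanishingIdeal_image2_sumElim :
    homogeneousVanishingIdeal (sumWeight w₁ w₂) (Set.image2 Sum.elim Y Z) =
      (homogeneousVanishingIdeal w₁ Y).map (rename Sum.inl : _ →ₐ[K] MvPolynomial (σ ⊕ τ) K) ⊔
        (homogeneousVanishingIdeal w₂ Z).map
          (rename Sum.inr : _ →ₐ[K] MvPolynomial (σ ⊕ τ) K) := by
  refine le_antisymm (Ideal.span_le.2 ?_) (sup_le ?_ ?_)
  · rintro F ⟨⟨⟨d, e⟩, hF⟩, hFYZ⟩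
    rw [← ker_sumToTensor_mkₐ]
    refine eq_zero_of_forall_productMap_eq_zero
      (fun _ => eq_zero_of_forall_evalQuotient_eq_zero (d := d))
      (fun _ => eq_zero_of_forall_evalQuotient_eq_zero (d := e)) ?_ fun y z => ?_
    · rw [← map_sumToTensor_weightedHomogeneousSubmodule]
      exact Submodule.mem_map_of_mem hF
    · exact (productMap_evalQuotient_sumToTensor y z F).trans
        (hFYZ _ (Set.mem_image2_of_mem y.2 z.2))
  · exact map_rename_homogeneousVanishingIdeal_le (w' := sumWeight w₁ w₂) (f := Sum.inl)
      (AddMonoidHom.inl M N) (fun _ => rfl)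
      (Set.forall_mem_image2.2 fun _ hy _ _ => hy)
  · exact map_rename_homogeneousVanishingIdeal_le (w' := sumWeight w₁ w₂) (f := Sum.inr)
      (AddMonoidHom.inr M N) (fun _ => rfl)
      (Set.forall_mem_image2.2 fun _ _ _ hz => hz)

end TensorComparison

section ProductConfigurations

variable (K : Type) [Field K] {m n : ℕ}
  (Y₁ : Finset (Fin (m + 1) → K)) (Y₂ : Finset (Fin (n + 1) → K))

lemma vIdealB_product : vIdealB K (Y₁ ×ˢ Y₂) =
    Ideal.map (rename Sum.inl : PRing K m →ₐ[K] BiRing K m n) (vIdeal1 K Y₁) ⊔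
      Ideal.map (rename Sum.inr : PRing K n →ₐ[K] BiRing K m n) (vIdeal1 K Y₂) := by
  have vIdealB_eq : vIdealB K (Y₁ ×ˢ Y₂) = homogeneousVanishingIdeal
      (sumWeight (wt1 m) (wt1 n)) (Set.image2 Sum.elim (Y₁ : Set (Fin (m + 1) → K)) Y₂) := by
    rw [← Set.image_prod, ← Finset.coe_product, homogeneousVanishingIdeal]
    simp only [Set.forall_mem_image]
    rfl
  exact vIdealB_eq.trans homogeneousVanishingIdeal_image2_sumElim

lemma HFB_product (i j : ℤ) : HFB K (Y₁ ×ˢ Y₂) (i, j) = HF1 K Y₁ i * HF1 K Y₂ j := by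
  rw [HFB, vIdealB_product]
  exact finrank_map_mkₐ_sup_weightedHomogeneousSubmodule _ _ (wt1 m) (wt1 n) i j

variable {Y₁ Y₂}

lemma isACM_product [Infinite K] (h₁ : ∀ y ∈ Y₁, y ≠ 0) (h₂ : ∀ y ∈ Y₂, y ≠ 0) :
    IsACM K (Y₁ ×ˢ Y₂) := by
  obtain ⟨l₁, hl₁, hl₁Y⟩ := exists_isWeightedHomogeneous_const_forall_eval_ne_zero (1 : ℤ)
    Y₁.finite_toSet h₁
  obtain ⟨l₂, hl₂, hl₂Y⟩ := exists_isWeightedHomogeneous_const_forall_eval_ne_zero (1 : ℤ)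
    Y₂.finite_toSet h₂
  refine ⟨rename Sum.inl l₁, rename Sum.inr l₂, isWeightedHomogeneous_rename_inl hl₁,
    isWeightedHomogeneous_rename_inr hl₂, regPair_mk_rename (vIdealB_product K Y₁ Y₂) ?_ ?_⟩
  · exact mk_mem_nonZeroDivisors_of_forall_eval_ne_zero hl₁ hl₁Y
  · exact mk_mem_nonZeroDivisors_of_forall_eval_ne_zero hl₂ hl₂Y

end ProductConfigurations

end MultiProjPoints

open MultiProjPoints in
theorem statement_9_general (K : Type) [Field K] [Infinite K] {m n : ℕ}
    (Y₁ : Finset (Fin (m + 1) → K)) (Y₂ : Finset (Fin (n + 1) → K))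
    (h₁ : ∀ y ∈ Y₁, y ≠ 0) (h₂ : ∀ y ∈ Y₂, y ≠ 0) :
    IsACM K (Y₁ ×ˢ Y₂) ∧
    vIdealB K (Y₁ ×ˢ Y₂) =
      Ideal.map (rename Sum.inl : PRing K m →ₐ[K] BiRing K m n) (vIdeal1 K Y₁) ⊔
        Ideal.map (rename Sum.inr : PRing K n →ₐ[K] BiRing K m n) (vIdeal1 K Y₂) ∧
    ∀ i j : ℤ, HFB K (Y₁ ×ˢ Y₂) (i, j) = HF1 K Y₁ i * HF1 K Y₂ j :=
  ⟨isACM_product K h₁ h₂, vIdealB_product K Y₁ Y₂, HFB_product K Y₁ Y₂⟩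

open MultiProjPoints in
/-- Lemma 4.2: if `𝕏 = 𝕏₁ × 𝕏₂` then `𝕏` is ACM,
`I_𝕏 = I_{𝕏₁}S + I_{𝕏₂}S`, and `HF_𝕏(i,j) = HF_{𝕏₁}(i)·HF_{𝕏₂}(j)` for all
`(i,j) ∈ ℤ²`. -/
theorem statement_9 (K : Type) [Field K] [CharZero K] [DecidableEq K]
    (m n : ℕ) (𝕏 : Finset (BiPt K m n)) (hgood : GoodConfig K 𝕏)
    (hne : 𝕏.Nonempty)
    (hprod : 𝕏 = (𝕏.image Prod.fst) ×ˢ (𝕏.image Prod.snd)) :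
    IsACM K 𝕏 ∧
    vIdealB K 𝕏 =
      Ideal.map (rename Sum.inl : PRing K m →ₐ[K] BiRing K m n)
        (vIdeal1 K (𝕏.image Prod.fst)) ⊔
      Ideal.map (rename Sum.inr : PRing K n →ₐ[K] BiRing K m n)
        (vIdeal1 K (𝕏.image Prod.snd)) ∧
    ∀ i j : ℤ, HFB K 𝕏 (i, j) =
      HF1 K (𝕏.image Prod.fst) i * HF1 K (𝕏.image Prod.snd) j := by
  have h := statement_9_general K (𝕏.image Prod.fst) (𝕏.image Prod.snd)
    (Finset.forall_mem_image.2 fun p hp => (hgood.1 p hp).1)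
    (Finset.forall_mem_image.2 fun p hp => (hgood.1 p hp).2)
  rwa [← hprod] at h
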